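/- arXiv:1209.1088 — 3 statements merged into one kernel-verified Lean document; each statement's English description precedes it below -/
import Mathlib

section
/- Let G be a finite abelian group, k a commutative ring, and σ : k[G] → k[G] the k-linear map determined on basis elements by σ([g]) = [g⁻¹]. With U' = Σ_{g∈G} [g²], one has σ(a · U') = a · U' for every a ∈ k[G]. -/
/-!
The map `σ` reverses products, so `σ (h * U') = U' * h⁻¹` once `σ` fixes `U' = ∑ g, [g²]`, which it
does because `g ↦ g⁻¹` permutes the summands. As `h * g² * h = (h * g)²`, also `h * U' * h = U'`,
and hence `U' * h⁻¹ = h * U'`.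
-/

section Inversion

variable {k G : Type*} [Semiring k] [Group G] {σ : MonoidAlgebra k G →ₗ[k] MonoidAlgebra k G}

theorem map_of_mul_eq_map_mul_of_inv
    (hσ : ∀ g : G, σ (MonoidAlgebra.of k G g) = MonoidAlgebra.of k G g⁻¹)
    (h : G) (x : MonoidAlgebra k G) :
    σ (MonoidAlgebra.of k G h * x) = σ x * MonoidAlgebra.of k G h⁻¹ := by
  induction x using MonoidAlgebra.induction_on with
  | of g => rw [← map_mul, hσ, hσ, mul_inv_rev, map_mul]
  | add x y hx hy => rw [mul_add, map_add, map_add, add_mul, hx, hy]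
  | smul r x hx =>
    have of_mul_smul : MonoidAlgebra.of k G h * r • x = r • (MonoidAlgebra.of k G h * x) := by
      ext g
      simp
    rw [of_mul_smul, map_smul, map_smul, hx, smul_mul_assoc]

theorem map_sum_of_pow_eq_self [Fintype G]
    (hσ : ∀ g : G, σ (MonoidAlgebra.of k G g) = MonoidAlgebra.of k G g⁻¹) (n : ℕ) :
    σ (∑ g : G, MonoidAlgebra.of k G (g ^ n)) = ∑ g : G, MonoidAlgebra.of k G (g ^ n) := by
  simp only [map_sum, hσ, ← inv_pow]
  exact Equiv.sum_comp (Equiv.inv G) fun g ↦ MonoidAlgebra.of k G (g ^ n)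

theorem map_mul_eq_mul_of_of_mul_mul_of_eq
    (hσ : ∀ g : G, σ (MonoidAlgebra.of k G g) = MonoidAlgebra.of k G g⁻¹)
    {u : MonoidAlgebra k G} (map_u : σ u = u)
    (of_mul_u_mul_of : ∀ h : G, MonoidAlgebra.of k G h * u * MonoidAlgebra.of k G h = u)
    (a : MonoidAlgebra k G) : σ (a * u) = a * u := by
  induction a using MonoidAlgebra.induction_on with
  | of h =>
    calc
      σ (MonoidAlgebra.of k G h * u) = u * MonoidAlgebra.of k G h⁻¹ := by
        rw [map_of_mul_eq_map_mul_of_inv hσ, map_u]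
      _ = MonoidAlgebra.of k G h * u * MonoidAlgebra.of k G h * MonoidAlgebra.of k G h⁻¹ := by
        rw [of_mul_u_mul_of]
      _ = MonoidAlgebra.of k G h * u := by
        rw [mul_assoc, ← map_mul, mul_inv_cancel, map_one, mul_one]
  | add a b ha hb => rw [add_mul, map_add, ha, hb]
  | smul r a ha => rw [smul_mul_assoc, map_smul, ha]

end Inversion

theorem of_mul_sum_of_sq_mul_of {k G : Type*} [Semiring k] [CommGroup G] [Fintype G] (h : G) :
    MonoidAlgebra.of k G h * (∑ g : G, MonoidAlgebra.of k G (g ^ 2)) * MonoidAlgebra.of k G h =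
      ∑ g : G, MonoidAlgebra.of k G (g ^ 2) := by
  have mul_sq_mul (g : G) : h * g ^ 2 * h = (h * g) ^ 2 := by
    rw [mul_right_comm, ← sq, mul_pow]
  simp only [Finset.mul_sum, Finset.sum_mul, ← map_mul, mul_sq_mul]
  exact Equiv.sum_comp (Equiv.mulLeft h) fun g ↦ MonoidAlgebra.of k G (g ^ 2)

theorem stmt_1_general {k G : Type*} [Semiring k] [CommGroup G] [Fintype G]
    {σ : MonoidAlgebra k G →ₗ[k] MonoidAlgebra k G}
    (hσ : ∀ g : G, σ (MonoidAlgebra.of k G g) = MonoidAlgebra.of k G g⁻¹)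
    (a : MonoidAlgebra k G) :
    σ (a * ∑ g : G, MonoidAlgebra.of k G (g ^ 2)) = a * ∑ g : G, MonoidAlgebra.of k G (g ^ 2) :=
  map_mul_eq_mul_of_of_mul_mul_of_eq hσ (map_sum_of_pow_eq_self hσ 2) of_mul_sum_of_sq_mul_of a

/-- Let `G` be a finite abelian group, `k` a commutative ring, and `σ` the `k`-linear map on
`k[G]` determined on basis elements by `σ [g] = [g⁻¹]`.  With `U' = ∑ g, [g²]`, one has
`σ (a * U') = a * U'` for every `a ∈ k[G]`. -/
theorem stmt_1 (G : Type*) [CommGroup G] [Fintype G] (k : Type*) [CommRing k]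
    (σ : MonoidAlgebra k G →ₗ[k] MonoidAlgebra k G)
    (hσ : ∀ g : G, σ (MonoidAlgebra.of k G g) = MonoidAlgebra.of k G g⁻¹)
    (U' : MonoidAlgebra k G) (hU : U' = ∑ g : G, MonoidAlgebra.of k G (g ^ 2)) :
    ∀ a : MonoidAlgebra k G, σ (a * U') = a * U' := by
  subst hU
  exact stmt_1_general hσ
end

section
/- Let k be a field and let A and B be finite-dimensional associative k-algebras. Then the following are equivalent: (i) for all a ∈ A and b ∈ B, the four k-linear endomorphisms of A ⊗_k B given by L_a ⊗ L_b, L_a ⊗ R_b, R_a ⊗ L_b and R_a ⊗ R_b all have trace zero, where L_x and R_x denote left and right multiplication by x and f ⊗ g denotes the tensor product of linear maps; (ii) A is unimodular or B is unimodular. -/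
theorem forall_trace_map_eq_zero_iff {R M N : Type*} [CommRing R] [NoZeroDivisors R]
    [AddCommGroup M] [Module R M] [Module.Free R M] [Module.Finite R M]
    [AddCommGroup N] [Module R N] [Module.Free R N] [Module.Finite R N]
    {ι κ : Sort*} (f : ι → Module.End R M) (g : κ → Module.End R N) :
    (∀ i j, LinearMap.trace R _ (TensorProduct.map (f i) (g j)) = 0) ↔
      (∀ i, LinearMap.trace R M (f i) = 0) ∨ ∀ j, LinearMap.trace R N (g j) = 0 := by
  simp only [LinearMap.trace_tensorProduct', mul_eq_zero, forall_or_left, forall_or_right]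

/-- An algebra, possibly neither unital nor associative, is unimodular if all of its left and right
multiplication operators are traceless. As `LinearMap.trace` is `0` on modules without a finite
basis, this is meaningful only for algebras that are finite and free over `R`. -/
def IsUnimodular (R A : Type*) [CommSemiring R] [NonUnitalNonAssocSemiring A] [Module R A]
    [SMulCommClass R A A] [IsScalarTower R A A] : Prop :=
  ∀ a : A, LinearMap.trace R A (LinearMap.mulLeft R a) = 0 ∧
    LinearMap.trace R A (LinearMap.mulRight R a) = 0

open TensorProduct in
theorem stmt_4_general (R A B : Type*) [CommRing R] [NoZeroDivisors R]
    [NonUnitalNonAssocRing A] [Module R A] [SMulCommClass R A A] [IsScalarTower R A A]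
    [Module.Free R A] [Module.Finite R A]
    [NonUnitalNonAssocRing B] [Module R B] [SMulCommClass R B B] [IsScalarTower R B B]
    [Module.Free R B] [Module.Finite R B] :
    (∀ (a : A) (b : B),
      LinearMap.trace R (A ⊗[R] B)
        (TensorProduct.map (LinearMap.mulLeft R a) (LinearMap.mulLeft R b)) = 0 ∧
      LinearMap.trace R (A ⊗[R] B)
        (TensorProduct.map (LinearMap.mulLeft R a) (LinearMap.mulRight R b)) = 0 ∧
      LinearMap.trace R (A ⊗[R] B)
        (TensorProduct.map (LinearMap.mulRight R a) (LinearMap.mulLeft R b)) = 0 ∧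
      LinearMap.trace R (A ⊗[R] B)
        (TensorProduct.map (LinearMap.mulRight R a) (LinearMap.mulRight R b)) = 0) ↔
    IsUnimodular R A ∨ IsUnimodular R B := by
  simp only [IsUnimodular, forall_and, forall_trace_map_eq_zero_iff]
  rw [and_or_right, or_and_left, or_and_left, and_assoc]

open TensorProduct in
/-- Let `k` be a field and `A`, `B` finite-dimensional associative `k`-algebras.  The tensor
products of left/right multiplication operators `L_a ⊗ L_b`, `L_a ⊗ R_b`, `R_a ⊗ L_b`,
`R_a ⊗ R_b` all have trace zero on `A ⊗[k] B` for all `a`, `b` if and only if `A` is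
unimodular or `B` is unimodular (`X` unimodular meaning every left and right multiplication
operator on `X` has trace zero). -/
theorem stmt_4 (k A B : Type*) [Field k]
    [Ring A] [Algebra k A] [FiniteDimensional k A]
    [Ring B] [Algebra k B] [FiniteDimensional k B] :
    (∀ (a : A) (b : B),
      LinearMap.trace k (A ⊗[k] B)
        (TensorProduct.map (LinearMap.mulLeft k a) (LinearMap.mulLeft k b)) = 0 ∧
      LinearMap.trace k (A ⊗[k] B)
        (TensorProduct.map (LinearMap.mulLeft k a) (LinearMap.mulRight k b)) = 0 ∧
      LinearMap.trace k (A ⊗[k] B)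
        (TensorProduct.map (LinearMap.mulRight k a) (LinearMap.mulLeft k b)) = 0 ∧
      LinearMap.trace k (A ⊗[k] B)
        (TensorProduct.map (LinearMap.mulRight k a) (LinearMap.mulRight k b)) = 0) ↔
    ((∀ a : A, LinearMap.trace k A (LinearMap.mulLeft k a) = 0 ∧
        LinearMap.trace k A (LinearMap.mulRight k a) = 0) ∨
     (∀ b : B, LinearMap.trace k B (LinearMap.mulLeft k b) = 0 ∧
        LinearMap.trace k B (LinearMap.mulRight k b) = 0)) :=
  stmt_4_general k A B
end

section
/- Let k be a commutative ring and A an involutive associative k-algebra with involution x ↦ x*. On the Hochschild cochain complex Cⁿ(A,A) (n ≥ 0) define T by (Tf)(a₁,…,aₙ) = (−1)^{n(n+1)/2+1} ( f(aₙ*, aₙ₋₁*, …, a₁*) )* (and on C⁰(A,A) = A by T(x) = −x*). Then T∘T is the identity on each Cⁿ(A,A), and T is a chain map: d(Tf) = T(df) for every Hochschild cochain f. -/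
/-- The Hochschild differential `d : Cⁿ(A,A) → Cⁿ⁺¹(A,A)` on cochains
(`(df)(a₁,…,a_{n+1}) = a₁·f(a₂,…,a_{n+1}) + Σᵢ (−1)ⁱ f(a₁,…,aᵢ·aᵢ₊₁,…,a_{n+1})
  + (−1)^{n+1} f(a₁,…,aₙ)·a_{n+1}`). -/
def hochD {A : Type*} [Ring A] (n : ℕ)
    (f : (Fin n → A) → A) : (Fin (n + 1) → A) → A :=
  fun a =>
    a 0 * f (fun i => a i.succ) +
      (∑ i : Fin n, (-1 : ℤ) ^ (i.1 + 1) •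
        f (fun j => if j.1 < i.1 then a j.castSucc
            else if j.1 = i.1 then a i.castSucc * a i.succ
            else a j.succ)) +
      (-1 : ℤ) ^ (n + 1) • (f (fun i => a i.castSucc) * a (Fin.last n))

/-- The involution `T` on Hochschild cochains associated to an involution `σ` of `A`:
`(Tf)(a₁,…,aₙ) = (−1)^{n(n+1)/2+1} σ (f (σ aₙ, …, σ a₁))`. -/
def hochT {k A : Type*} [CommRing k] [Ring A] [Algebra k A]
    (σ : A →ₗ[k] A) (n : ℕ) (f : (Fin n → A) → A) : (Fin n → A) → A :=
  fun a => (-1 : ℤ) ^ (n * (n + 1) / 2 + 1) • σ (f (fun i => σ (a i.rev)))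

/-!
The differential is the alternating sum `d = ∑ i, (-1) ^ i • δ i` of cofaces, `0 ≤ i ≤ n + 1`.
Reversing the arguments and applying the involution everywhere, `(R f) a = σ (f (σ ∘ a ∘ rev))`,
exchanges `δ i` with `δ (n + 1 - i)`, so `d R = (-1) ^ (n + 1) R d`. The triangular-number sign in
`T = ± R` changes by exactly `(-1) ^ (n + 1)` from degree `n` to degree `n + 1`, hence `d T = T d`.
-/

theorem neg_one_pow_mul_self {R : Type*} [Monoid R] [HasDistribNeg R] (n : ℕ) :
    (-1 : R) ^ n * (-1) ^ n = 1 := by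
  rw [← pow_add, Even.neg_one_pow ⟨n, rfl⟩]

theorem neg_one_pow_rev {R : Type*} [Monoid R] [HasDistribNeg R] {n : ℕ} (i : Fin (n + 1)) :
    (-1 : R) ^ (i.rev : ℕ) = (-1) ^ n * (-1) ^ (i : ℕ) := by
  have hn : (-1 : R) ^ n = (-1) ^ (i.rev : ℕ) * (-1) ^ (i : ℕ) := by
    rw [← pow_add, Fin.rev_add_cast]
  rw [hn, mul_assoc, neg_one_pow_mul_self, mul_one]

theorem contractNth_castSucc_comp_rev {α : Type*} {n : ℕ} (op : α → α → α) (i : Fin n)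
    (a : Fin (n + 1) → α) :
    Fin.contractNth i.castSucc op a ∘ Fin.rev =
      Fin.contractNth i.rev.castSucc (fun x y => op y x) (a ∘ Fin.rev) := by
  funext j
  rcases lt_trichotomy j i.rev with hlt | rfl | hgt
  · rw [Function.comp_apply, Fin.contractNth_apply_of_gt _ _ _ _ (Fin.lt_rev_iff.mpr hlt),
      Fin.contractNth_apply_of_lt _ _ _ _ hlt, Function.comp_apply, Fin.rev_castSucc]
  · rw [Function.comp_apply, Fin.rev_rev, Fin.contractNth_apply_of_eq _ _ _ _ rfl,
      Fin.contractNth_apply_of_eq _ _ _ _ rfl, Function.comp_apply, Function.comp_apply,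
      Fin.rev_castSucc, Fin.rev_succ, Fin.rev_rev]
  · rw [Function.comp_apply, Fin.contractNth_apply_of_lt _ _ _ _ (Fin.rev_lt_iff.mpr hgt),
      Fin.contractNth_apply_of_gt _ _ _ _ hgt, Function.comp_apply, Fin.rev_succ]

/-- The conjugate `R f` of an `n`-ary operation `f` by `σ`, taken with the arguments in reverse
order: the operator `T` without its sign. -/
def revConj {α : Type*} (σ : α → α) {n : ℕ} (f : (Fin n → α) → α) : (Fin n → α) → α :=
  fun a => σ (f (σ ∘ a ∘ Fin.rev))

theorem revConj_revConj {α : Type*} {σ : α → α} (hσ : Function.Involutive σ) {n : ℕ}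
    (f : (Fin n → α) → α) : revConj σ (revConj σ f) = f := by
  funext a
  have hargs : σ ∘ (σ ∘ a ∘ Fin.rev) ∘ Fin.rev = a := by
    funext i
    simp only [Function.comp_apply, Fin.rev_rev, hσ (a i)]
  simp only [revConj, hargs, hσ (f a)]

theorem revConj_zsmul {A : Type*} [AddGroup A] (σ : A →+ A) {n : ℕ} (c : ℤ)
    (f : (Fin n → A) → A) : revConj σ (c • f) = c • revConj σ f :=
  funext fun _ => map_zsmul σ c _

/-- The `i`-th coface `δ i` of the Hochschild cosimplicial object: `δ 0` and `δ (n + 1)` multiply by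
the first and the last argument from outside, and `δ i` for `0 < i < n + 1` multiplies the
`i`-th and `(i + 1)`-st arguments (counted from `1`) inside. -/
def hochCoface {A : Type*} [Mul A] {n : ℕ} (i : Fin (n + 2)) (f : (Fin n → A) → A) :
    (Fin (n + 1) → A) → A :=
  fun a => Fin.cases (a 0 * f (Fin.tail a))
    (Fin.lastCases (f (Fin.init a) * a (Fin.last n))
      fun j => f (Fin.contractNth j.castSucc (· * ·) a)) i

section Coface

variable {A : Type*} [Mul A] {n : ℕ} (f : (Fin n → A) → A) (a : Fin (n + 1) → A)

theorem hochCoface_zero : hochCoface 0 f a = a 0 * f (Fin.tail a) := rfl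

theorem hochCoface_last :
    hochCoface (Fin.last (n + 1)) f a = f (Fin.init a) * a (Fin.last n) := by
  simp only [hochCoface, ← Fin.succ_last, Fin.cases_succ, Fin.lastCases_last]

theorem hochCoface_succ_castSucc (j : Fin n) :
    hochCoface j.castSucc.succ f a = f (Fin.contractNth j.castSucc (· * ·) a) := by
  simp only [hochCoface, Fin.cases_succ, Fin.lastCases_castSucc]

theorem hochCoface_revConj {σ : A → A} (hσ : Function.Involutive σ)
    (hmul : ∀ x y, σ (x * y) = σ y * σ x) (i : Fin (n + 2)) :
    hochCoface i (revConj σ f) = revConj σ (hochCoface i.rev f) := by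
  funext a
  cases i using Fin.cases with
  | zero =>
    have hargs : σ ∘ Fin.tail a ∘ Fin.rev = Fin.init (σ ∘ a ∘ Fin.rev) := by
      funext j
      simp only [Function.comp_apply, Fin.tail, Fin.init, Fin.rev_castSucc]
    simp only [Fin.rev_zero, revConj, hochCoface_zero, hochCoface_last, hargs, hmul,
      Function.comp_apply, Fin.rev_last, hσ (a 0)]
  | succ i =>
    cases i using Fin.lastCases with
    | last =>
      have hargs : σ ∘ Fin.init a ∘ Fin.rev = Fin.tail (σ ∘ a ∘ Fin.rev) := by
        funext j
        simp only [Function.comp_apply, Fin.tail, Fin.init, Fin.rev_succ]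
      simp only [Fin.succ_last, Fin.rev_last, revConj, hochCoface_zero, hochCoface_last, hargs,
        hmul, Function.comp_apply, Fin.rev_zero, hσ (a (Fin.last n))]
    | cast j =>
      have hargs : σ ∘ Fin.contractNth j.castSucc (· * ·) a ∘ Fin.rev =
          Fin.contractNth j.rev.castSucc (· * ·) (σ ∘ a ∘ Fin.rev) := by
        rw [contractNth_castSucc_comp_rev]
        exact Fin.comp_contractNth _ _ (fun x y => hmul y x) _ _
      have hrev : j.castSucc.succ.rev = j.rev.castSucc.succ := by
        rw [Fin.rev_succ, Fin.rev_castSucc, Fin.succ_castSucc]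
      simp only [hrev, revConj, hochCoface_succ_castSucc, hargs]

end Coface

section Differential

variable {A : Type*} [Ring A] {n : ℕ}

theorem hochD_apply_eq_sum_hochCoface (f : (Fin n → A) → A) (a : Fin (n + 1) → A) :
    hochD n f a = ∑ i : Fin (n + 2), (-1 : ℤ) ^ (i : ℕ) • hochCoface i f a := by
  have hinner (i : Fin n) : hochCoface i.castSucc.succ f a =
      f (fun j => if j.1 < i.1 then a j.castSucc
        else if j.1 = i.1 then a i.castSucc * a i.succ else a j.succ) := by
    rw [hochCoface_succ_castSucc]
    congr 1 with j
    simp only [Fin.contractNth, Fin.val_castSucc]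
    split_ifs with hlt heq
    · rfl
    · rw [Fin.ext heq]
    · rfl
  rw [Fin.sum_univ_succ, Fin.sum_univ_castSucc]
  simp only [hinner, Fin.succ_last, hochCoface_zero, hochCoface_last, Fin.val_zero, pow_zero,
    one_smul, Fin.val_succ, Fin.val_castSucc, Fin.val_last, ← add_assoc]
  rfl

theorem hochD_zsmul (c : ℤ) (f : (Fin n → A) → A) : hochD n (c • f) = c • hochD n f := by
  funext a
  simp only [hochD, Pi.smul_apply, smul_add, Finset.smul_sum, mul_smul_comm, smul_mul_assoc,
    smul_comm c]

theorem hochD_revConj {σ : A →+ A} (hσ : Function.Involutive σ)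
    (hmul : ∀ x y, σ (x * y) = σ y * σ x) (f : (Fin n → A) → A) :
    hochD n (revConj σ f) = (-1 : ℤ) ^ (n + 1) • revConj σ (hochD n f) := by
  funext a
  calc hochD n (revConj σ f) a
      = ∑ i : Fin (n + 2), (-1 : ℤ) ^ (i : ℕ) • revConj σ (hochCoface i.rev f) a := by
        simp only [hochD_apply_eq_sum_hochCoface, hochCoface_revConj f hσ hmul]
    _ = ∑ i : Fin (n + 2), (-1 : ℤ) ^ (i.rev : ℕ) • revConj σ (hochCoface i f) a :=
        Fintype.sum_equiv Fin.revPerm _ _ fun i => by simp only [Fin.revPerm_apply, Fin.rev_rev]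
    _ = (-1 : ℤ) ^ (n + 1) •
          ∑ i : Fin (n + 2), (-1 : ℤ) ^ (i : ℕ) • revConj σ (hochCoface i f) a := by
        simp only [neg_one_pow_rev, mul_smul, Finset.smul_sum]
    _ = ((-1 : ℤ) ^ (n + 1) • revConj σ (hochD n f)) a := by
        simp only [Pi.smul_apply, revConj, hochD_apply_eq_sum_hochCoface, map_sum, map_zsmul]

end Differential

/-- The sign `(-1) ^ (n (n + 1) / 2 + 1)` of `T` on `n`-cochains. -/
def hochSign (n : ℕ) : ℤ := (-1) ^ (n * (n + 1) / 2 + 1)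

theorem hochSign_mul_self (n : ℕ) : hochSign n * hochSign n = 1 :=
  neg_one_pow_mul_self _

theorem hochSign_succ (n : ℕ) : hochSign (n + 1) = hochSign n * (-1) ^ (n + 1) := by
  have htriangle : (n + 1) * (n + 1 + 1) / 2 = n * (n + 1) / 2 + (n + 1) := by
    simpa only [Nat.add_sub_cancel, mul_comm] using Nat.triangle_succ (n + 1)
  rw [hochSign, hochSign, htriangle, ← pow_add, add_right_comm]

section Involution

variable {k A : Type*} [CommRing k] [Ring A] [Algebra k A] {σ : A →ₗ[k] A} {n : ℕ}

theorem hochT_eq_hochSign_smul_revConj (f : (Fin n → A) → A) :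
    hochT σ n f = hochSign n • revConj (σ : A →+ A) f := rfl

theorem hochT_hochT (hσ : Function.Involutive σ) (f : (Fin n → A) → A) :
    hochT σ n (hochT σ n f) = f := by
  simp only [hochT_eq_hochSign_smul_revConj, revConj_zsmul, smul_smul, hochSign_mul_self, one_smul]
  exact revConj_revConj hσ f

theorem hochD_hochT (hσ : Function.Involutive σ) (hmul : ∀ x y, σ (x * y) = σ y * σ x)
    (f : (Fin n → A) → A) : hochD n (hochT σ n f) = hochT σ (n + 1) (hochD n f) := by
  have hrev : hochD n (revConj (σ : A →+ A) f) =
      (-1 : ℤ) ^ (n + 1) • revConj (σ : A →+ A) (hochD n f) := hochD_revConj hσ hmul f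
  rw [hochT_eq_hochSign_smul_revConj, hochT_eq_hochSign_smul_revConj, hochD_zsmul, hrev,
    smul_smul, hochSign_succ]

end Involution

/-- For an involutive associative `k`-algebra `A` (involution `σ`, `σ (σ x) = x`,
`σ (x*y) = σ y * σ x`), the operator `T` on Hochschild cochains is an involution and a
chain map: `T ∘ T = id` and `d (T f) = T (d f)`. -/
theorem stmt_5 (k A : Type*) [CommRing k] [Ring A] [Algebra k A]
    (σ : A →ₗ[k] A) (hinv : ∀ x : A, σ (σ x) = x)
    (hmul : ∀ x y : A, σ (x * y) = σ y * σ x) :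
    (∀ (n : ℕ) (f : (Fin n → A) → A), hochT σ n (hochT σ n f) = f) ∧
    (∀ (n : ℕ) (f : (Fin n → A) → A),
      hochD n (hochT σ n f) = hochT σ (n + 1) (hochD n f)) := by
  exact ⟨fun _ => hochT_hochT hinv, fun _ => hochD_hochT hinv hmul⟩
end
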